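/- Assume moreover that 2p ≤ n−2. Then for every r ∈ (0,R] the function t ↦ h(t)^{n−2p−3}·ψ(t) is integrable on (0,r) (here n−2p−3 ≥ −1 is an integer, and the possibly negative integer power is taken of the positive real number h(t) for t > 0), and the integrated form of the ODE holds: h(r)^{n−2p−1}·ψ'(r) = λ·∫₀^r h(t)^{n−2p−3}·ψ(t) dt. -/

import Mathlib

open MeasureTheory Set

/-- Integrated form of the separation-of-variables ODE for Karpukhin's Steklov problem
on coclosed p-forms on a warped product, in the case 2p ≤ n-2. -/
theorem stmt_0
    (n p m : ℤ) (hn : 3 ≤ n) (hp : 1 ≤ p) (hm : 1 ≤ m)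
    (R : ℝ) (hR : 0 < R)
    (h h' h'' ψ ψ' ψ'' : ℝ → ℝ)
    (hder1 : ∀ r ∈ Set.Icc (0:ℝ) R, HasDerivWithinAt h (h' r) (Set.Icc 0 R) r)
    (hder2 : ∀ r ∈ Set.Icc (0:ℝ) R, HasDerivWithinAt h' (h'' r) (Set.Icc 0 R) r)
    (hcont2 : ContinuousOn h'' (Set.Icc 0 R))
    (pder1 : ∀ r ∈ Set.Icc (0:ℝ) R, HasDerivWithinAt ψ (ψ' r) (Set.Icc 0 R) r)
    (pder2 : ∀ r ∈ Set.Icc (0:ℝ) R, HasDerivWithinAt ψ' (ψ'' r) (Set.Icc 0 R) r)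
    (pcont2 : ContinuousOn ψ'' (Set.Icc 0 R))
    (h0 : h 0 = 0) (h'0 : h' 0 = 1)
    (hpos : ∀ r ∈ Set.Ioc (0:ℝ) R, 0 < h r)
    (ψ0 : ψ 0 = 0)
    (ode : ∀ r ∈ Set.Ioc (0:ℝ) R,
      ψ'' r + ((n - 2 * p - 1 : ℤ) : ℝ) * (h' r / h r) * ψ' r
        - (((m + p) * (n + m - p - 2) : ℤ) : ℝ) * ψ r / (h r) ^ 2 = 0)
    (hp2 : 2 * p ≤ n - 2) :
    ∀ r ∈ Set.Ioc (0:ℝ) R,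
      MeasureTheory.IntegrableOn (fun t => h t ^ (n - 2 * p - 3) * ψ t) (Set.Ioo 0 r) ∧
      h r ^ (n - 2 * p - 1) * ψ' r
        = (((m + p) * (n + m - p - 2) : ℤ) : ℝ)
            * ∫ t in (0:ℝ)..r, h t ^ (n - 2 * p - 3) * ψ t := by
  intro r hr
  obtain ⟨j, hj⟩ : ∃ j : ℕ, n - 2 * p - 1 = (j : ℤ) + 1 :=
    ⟨(n - 2 * p - 2).toNat, by omega⟩
  have hj3 : n - 2 * p - 3 = (j : ℤ) - 1 := by omega
  rw [hj] at ode
  rw [hj, hj3]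
  generalize (((m + p) * (n + m - p - 2) : ℤ) : ℝ) = l at ode ⊢
  have hc : ContinuousOn h (Set.Icc 0 R) := fun x hx => (hder1 x hx).continuousWithinAt
  have pc : ContinuousOn ψ (Set.Icc 0 R) := fun x hx => (pder1 x hx).continuousWithinAt
  have pc' : ContinuousOn ψ' (Set.Icc 0 R) := fun x hx => (pder2 x hx).continuousWithinAt
  have h0m : (0:ℝ) ∈ Set.Icc (0:ℝ) R := ⟨le_rfl, hR.le⟩
  have hq : ContinuousOn (Function.update (fun t => ψ t / h t) 0 (ψ' 0)) (Set.Icc 0 R) := by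
    intro x hx
    by_cases hx0 : x = 0
    · subst hx0
      rw [continuousWithinAt_update_same]
      have a := hasDerivWithinAt_iff_tendsto_slope.1 (pder1 0 h0m)
      have b := hasDerivWithinAt_iff_tendsto_slope.1 (hder1 0 h0m)
      have c := a.div b (by rw [h'0]; exact one_ne_zero)
      rw [h'0, div_one] at c
      refine c.congr' ?_
      filter_upwards [self_mem_nhdsWithin] with t ht
      have ht0 : t ≠ 0 := ht.2
      have hh : h t ≠ 0 := (hpos t ⟨lt_of_le_of_ne ht.1.1 (Ne.symm ht0), ht.1.2⟩).ne'
      simp only [slope_def_field, Pi.div_apply, h0, ψ0, sub_zero]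
      field_simp
    · rw [continuousWithinAt_update_of_ne hx0]
      exact (pc x hx).div (hc x hx)
        (hpos x ⟨lt_of_le_of_ne hx.1 (Ne.symm hx0), hx.2⟩).ne'
  have hsub : Set.Icc 0 r ⊆ Set.Icc 0 R := Set.Icc_subset_Icc le_rfl hr.2
  have hG : ContinuousOn (fun t => h t ^ j * Function.update (fun t => ψ t / h t) 0 (ψ' 0) t)
      (Set.Icc 0 r) := ((hc.pow j).mul hq).mono hsub
  have hI : IntegrableOn (fun t => h t ^ ((j : ℤ) - 1) * ψ t) (Set.Ioo 0 r) := by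
    refine ((hG.integrableOn_Icc (μ := volume)).mono_set Set.Ioo_subset_Icc_self).congr_fun ?_
      measurableSet_Ioo
    intro t ht
    have hh : h t ≠ 0 := (hpos t ⟨ht.1, ht.2.le.trans hr.2⟩).ne'
    simp only [Function.update_of_ne ht.1.ne']
    rw [zpow_sub_one₀ hh, zpow_natCast]
    field_simp
  refine ⟨hI, ?_⟩
  have e : ∀ x : ℝ, x ^ ((j : ℤ) + 1) = x ^ (j + 1) := fun x => by
    rw [← zpow_natCast]; push_cast; rfl
  have hII : IntervalIntegrable (fun t => h t ^ ((j : ℤ) - 1) * ψ t) volume 0 r := by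
    rw [intervalIntegrable_iff_integrableOn_Ioo_of_le hr.1.le]; exact hI
  have key := intervalIntegral.integral_eq_sub_of_hasDerivAt_of_le
    (f := fun t => h t ^ (j + 1) * ψ' t) (f' := fun t => l * (h t ^ ((j : ℤ) - 1) * ψ t))
    hr.1.le (((hc.pow (j + 1)).mul pc').mono hsub) ?_ (hII.const_mul l)
  · rw [intervalIntegral.integral_const_mul] at key
    rw [key, e]
    simp [h0]
  · intro t ht
    have htR : t < R := ht.2.trans_le hr.2
    have hh : h t ≠ 0 := (hpos t ⟨ht.1, htR.le⟩).ne'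
    have hn : Set.Icc 0 R ∈ nhds t := Icc_mem_nhds ht.1 htR
    have d1 := (hder1 t ⟨ht.1.le, htR.le⟩).hasDerivAt hn
    have d2 := (pder2 t ⟨ht.1.le, htR.le⟩).hasDerivAt hn
    have o := ode t ⟨ht.1, htR.le⟩
    refine ((d1.pow (j + 1)).mul d2).congr_deriv ?_
    rw [zpow_sub_one₀ hh, zpow_natCast]
    push_cast at o ⊢
    simp only [Pi.pow_apply, Nat.add_sub_cancel]
    field_simp at o ⊢
    linear_combination (h t ^ j) * o
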